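/- arXiv:1405.0392 — 2 statements merged into one kernel-verified Lean document; each statement's English description precedes it below -/
import Mathlib

section
/- Let G be a finite simple graph, let q(G) be its Q-index, and let x be a unit eigenvector of Q(G) with eigenvalue q(G) all of whose entries are nonnegative. Suppose c and d are adjacent vertices of G, and a and b are distinct non-adjacent vertices of G, with x_a + x_b > x_c + x_d. Let F be the graph obtained from G by deleting the edge cd and adding the edge ab. Then q(F) > q(G). -/
open Matrix

/-- The signless Laplacian `Q(G) = D(G) + A(G)` of a finite simple graph `G`. -/
noncomputable def signlessLaplacian {V : Type*} [Fintype V] (G : SimpleGraph V) :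
    Matrix V V ℝ :=
  letI := Classical.decEq V
  letI : DecidableRel G.Adj := Classical.decRel _
  Matrix.diagonal (fun v => (G.degree v : ℝ)) + G.adjMatrix ℝ

/-- The `Q`-index of `G`: the largest eigenvalue of the signless Laplacian `Q(G)`. -/
noncomputable def qIndex {V : Type*} [Fintype V] (G : SimpleGraph V) : ℝ :=
  letI := Classical.decEq V
  sSup (spectrum ℝ (signlessLaplacian G))

/-!
The quadratic form of `Q(G)` is the sum of `(x u + x v) ^ 2` over the edges `uv` of `G`, because
`Q(G) = N * Nᵀ` for the incidence matrix `N`. Hence moving the edge changes the form at `x` by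
`(x a + x b) ^ 2 - (x c + x d) ^ 2 > 0`, while `q(F)` bounds the Rayleigh quotient of `Q(F)` at `x`.
-/

section RayleighBound

open scoped ComplexOrder MatrixOrder

variable {𝕜 n : Type*} [RCLike 𝕜] [Fintype n] [DecidableEq n] {A : Matrix n n 𝕜}

lemma le_algebraMap_sSup_spectrum (hA : A.IsHermitian) :
    A ≤ algebraMap ℝ (Matrix n n 𝕜) (sSup (spectrum ℝ A)) :=
  le_algebraMap_of_spectrum_le
    (fun _ hr ↦ le_csSup (finite_real_spectrum (A := A)).bddAbove hr) hA.isSelfAdjoint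

lemma star_dotProduct_mulVec_le_sSup_spectrum_smul (hA : A.IsHermitian) (x : n → 𝕜) :
    star x ⬝ᵥ (A *ᵥ x) ≤ sSup (spectrum ℝ A) • (star x ⬝ᵥ x) := by
  have h := (le_iff.mp (le_algebraMap_sSup_spectrum hA)).dotProduct_mulVec_nonneg x
  rwa [sub_mulVec, dotProduct_sub, Algebra.algebraMap_eq_smul_one, smul_mulVec, one_mulVec,
    dotProduct_smul, sub_nonneg] at h

end RayleighBound

section IncidenceMatrix

variable {V R : Type*} [Fintype V] (G : SimpleGraph V)

lemma vecMul_incMatrix [DecidableEq V] [DecidableRel G.Adj] [NonAssocSemiring R] (x : V → R) :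
    x ᵥ* G.incMatrix R = G.edgeSet.indicator fun e ↦ (e.map x).add := by
  ext ⟨u, v⟩
  by_cases huv : G.Adj u v
  · have hinc (w : V) : G.incMatrix R w s(u, v) = if w ∈ ({u, v} : Finset V) then 1 else 0 := by
      simp [SimpleGraph.incMatrix_apply', SimpleGraph.mk'_mem_incidenceSet_iff, huv]
    simp [vecMul, dotProduct, hinc, huv, -Finset.mem_insert, Finset.sum_pair huv.ne]
  · have hinc (w : V) : G.incMatrix R w s(u, v) = 0 :=
      G.incMatrix_of_notMem_incidenceSet fun h ↦ huv h.1
    simp [vecMul, dotProduct, hinc, huv]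

lemma signlessLaplacian_eq_incMatrix_mul_transpose [DecidableEq V] [DecidableRel G.Adj] :
    signlessLaplacian G = G.incMatrix ℝ * (G.incMatrix ℝ)ᵀ := by
  rw [SimpleGraph.incMatrix_mul_transpose]
  ext u v
  obtain rfl | huv := eq_or_ne u v
  · simp only [signlessLaplacian, Matrix.add_apply, diagonal_apply_eq, SimpleGraph.adjMatrix_apply,
      SimpleGraph.irrefl, if_false, add_zero, of_apply, if_true]
    congr!
  · simp [signlessLaplacian, huv]

lemma dotProduct_signlessLaplacian_mulVec [Fintype G.edgeSet] (x : V → ℝ) :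
    x ⬝ᵥ (signlessLaplacian G *ᵥ x) = ∑ e ∈ G.edgeFinset, (e.map x).add ^ 2 := by
  classical
  calc x ⬝ᵥ (signlessLaplacian G *ᵥ x)
      = (x ᵥ* G.incMatrix ℝ) ⬝ᵥ (x ᵥ* G.incMatrix ℝ) := by
        rw [signlessLaplacian_eq_incMatrix_mul_transpose, ← mulVec_mulVec, dotProduct_mulVec,
          mulVec_transpose]
    _ = ∑ e ∈ G.edgeFinset, (e.map x).add ^ 2 := by
        simp [vecMul_incMatrix, dotProduct, Set.indicator_apply, sq,
          ← SimpleGraph.mem_edgeFinset]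

end IncidenceMatrix

section QIndex

variable {V : Type*} [Fintype V]

lemma isHermitian_signlessLaplacian (G : SimpleGraph V) : (signlessLaplacian G).IsHermitian := by
  classical
  rw [signlessLaplacian_eq_incMatrix_mul_transpose]
  exact isHermitian_mul_conjTranspose_self _

lemma dotProduct_signlessLaplacian_mulVec_le (G : SimpleGraph V) (x : V → ℝ) :
    x ⬝ᵥ (signlessLaplacian G *ᵥ x) ≤ qIndex G * (x ⬝ᵥ x) := by
  classical
  simpa [qIndex] using
    star_dotProduct_mulVec_le_sSup_spectrum_smul (isHermitian_signlessLaplacian G) x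

lemma qIndex_lt_qIndex_of_dotProduct_mulVec_lt {G F : SimpleGraph V} {x : V → ℝ}
    (heig : signlessLaplacian G *ᵥ x = qIndex G • x)
    (hlt : x ⬝ᵥ (signlessLaplacian G *ᵥ x) < x ⬝ᵥ (signlessLaplacian F *ᵥ x)) :
    qIndex G < qIndex F := by
  refine lt_of_mul_lt_mul_right ?_ (by simpa using dotProduct_star_self_nonneg x)
  calc qIndex G * (x ⬝ᵥ x) = x ⬝ᵥ (signlessLaplacian G *ᵥ x) := by
        rw [heig, dotProduct_smul, smul_eq_mul]
    _ < x ⬝ᵥ (signlessLaplacian F *ᵥ x) := hlt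
    _ ≤ qIndex F * (x ⬝ᵥ x) := dotProduct_signlessLaplacian_mulVec_le F x

end QIndex

section EdgeRotation

variable {V : Type*}

lemma edgeFinset_fromEdgeSet_sdiff_union [DecidableEq V] (G : SimpleGraph V) [Fintype G.edgeSet]
    (e : Sym2 V) {f : Sym2 V} (hf : ¬ f.IsDiag)
    [Fintype (SimpleGraph.fromEdgeSet (G.edgeSet \ {e} ∪ {f})).edgeSet] :
    (SimpleGraph.fromEdgeSet (G.edgeSet \ {e} ∪ {f})).edgeFinset =
      insert f (G.edgeFinset.erase e) := by
  have hdisj : Disjoint (G.edgeSet \ {e} ∪ {f}) Sym2.diagSet := by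
    rw [Set.disjoint_union_left, Set.disjoint_singleton_left]
    exact ⟨Set.disjoint_left.mpr fun _ he ↦ G.not_isDiag_of_mem_edgeSet he.1, hf⟩
  apply Finset.coe_injective
  rw [SimpleGraph.coe_edgeFinset, SimpleGraph.edgeSet_fromEdgeSet, hdisj.sdiff_eq_left,
    Finset.coe_insert, Finset.coe_erase, SimpleGraph.coe_edgeFinset, Set.union_singleton]

theorem stmt_1_general [Fintype V] {G : SimpleGraph V} {x : V → ℝ}
    (heig : signlessLaplacian G *ᵥ x = qIndex G • x)
    {c d a b : V} (hcd : G.Adj c d) (hab : a ≠ b) (hnadj : ¬ G.Adj a b)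
    (hx : |x c + x d| < |x a + x b|) :
    qIndex G <
      qIndex (SimpleGraph.fromEdgeSet ((G.edgeSet \ {s(c, d)}) ∪ {s(a, b)})) := by
  classical
  apply qIndex_lt_qIndex_of_dotProduct_mulVec_lt heig
  rw [dotProduct_signlessLaplacian_mulVec, dotProduct_signlessLaplacian_mulVec,
    edgeFinset_fromEdgeSet_sdiff_union G _ (by simpa using hab),
    Finset.sum_insert (by simp [hnadj]), Finset.sum_erase_eq_sub (by simpa using hcd)]
  have hsq : (x c + x d) ^ 2 < (x a + x b) ^ 2 := sq_lt_sq.mpr hx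
  simp only [Sym2.map_mk, Sym2.add_mk]
  linarith

end EdgeRotation

/-- rotating an edge towards a pair of vertices with larger eigenvector-entry sum
strictly increases the `Q`-index. -/
theorem stmt_1 {V : Type*} [Fintype V] [DecidableEq V] (G : SimpleGraph V)
    (x : V → ℝ) (hunit : ∑ v, x v ^ 2 = 1) (hnonneg : ∀ v, 0 ≤ x v)
    (heig : (signlessLaplacian G).mulVec x = qIndex G • x)
    (c d a b : V) (hcd : G.Adj c d) (hab : a ≠ b) (hnadj : ¬ G.Adj a b)
    (hx : x c + x d < x a + x b) :
    qIndex G <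
      qIndex (SimpleGraph.fromEdgeSet ((G.edgeSet \ {s(c, d)}) ∪ {s(a, b)})) :=
  stmt_1_general heig hcd hab hnadj <| by
    rwa [abs_of_nonneg (add_nonneg (hnonneg c) (hnonneg d)),
      abs_of_nonneg (add_nonneg (hnonneg a) (hnonneg b))]
end

section
/- Under the stated hypotheses on G, the eigenvector x satisfies x_k > x_0. -/
open Matrix

/-!
At a vertex `v` the eigenvalue equation reads `(q - d(v)) x_v = ∑_{w ~ v} x_w`. For a positive
eigenvector this forces `q > d(v)` unless `v` is isolated. When the neighbourhood of `u` is a proper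
part of that of `v`, passing from `u` to `v` increases the sum on the right and decreases the factor
`q - d` on the left, so `x_u < x_v`. The theorem is the case `u = v_0`, `v = v_k`.
-/

theorem neighborSet_ssubset_of_neighborSet_eq {V : Type*} {G : SimpleGraph V} {u v w : V}
    (hv : G.neighborSet v = {a | a ≠ u ∧ a ≠ v}) (hwu : w ≠ u) (hwv : w ≠ v)
    (huw : ¬G.Adj u w) : G.neighborSet u ⊂ G.neighborSet v := by
  have hadj (a : V) : G.Adj v a ↔ a ≠ u ∧ a ≠ v := Set.ext_iff.1 hv a
  refine Set.ssubset_iff_exists.2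
    ⟨fun a hua => (hadj a).2 ⟨hua.ne', ?_⟩, w, (hadj w).2 ⟨hwu, hwv⟩, huw⟩
  rintro rfl
  exact ((hadj u).1 hua.symm).1 rfl

section SignlessLaplacian

variable {V : Type*} [Fintype V] {G : SimpleGraph V} {x : V → ℝ} {q : ℝ} {u v : V}

section Decidable

variable [DecidableRel G.Adj]

variable (G x v) in
theorem signlessLaplacian_mulVec_apply :
    (signlessLaplacian G *ᵥ x) v = G.degree v * x v + ∑ w ∈ G.neighborFinset v, x w := by
  classical
  have hQ : signlessLaplacian G =
      diagonal (fun v => (G.degree v : ℝ)) + G.adjMatrix ℝ := by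
    unfold signlessLaplacian
    congr!
  rw [hQ, add_mulVec, Pi.add_apply, mulVec_diagonal, SimpleGraph.adjMatrix_mulVec_apply]

theorem sub_degree_mul_eq_sum_neighborFinset (heig : signlessLaplacian G *ᵥ x = q • x) (v : V) :
    (q - G.degree v) * x v = ∑ w ∈ G.neighborFinset v, x w := by
  have hv := congrFun heig v
  rw [signlessLaplacian_mulVec_apply, Pi.smul_apply, smul_eq_mul] at hv
  linarith

theorem degree_lt_of_signlessLaplacian_mulVec_eq_smul (hpos : ∀ w, 0 < x w)
    (heig : signlessLaplacian G *ᵥ x = q • x) (hv : (G.neighborFinset v).Nonempty) :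
    (G.degree v : ℝ) < q := by
  have hsum : 0 < (q - G.degree v) * x v := by
    rw [sub_degree_mul_eq_sum_neighborFinset heig]
    exact Finset.sum_pos (fun w _ => hpos w) hv
  exact sub_pos.1 (pos_of_mul_pos_left hsum (hpos v).le)

end Decidable

theorem stmt_2_general (hpos : ∀ w, 0 < x w) (heig : signlessLaplacian G *ᵥ x = q • x)
    (huv : G.neighborSet u ⊂ G.neighborSet v) : x u < x v := by
  classical
  have hN : G.neighborFinset u ⊂ G.neighborFinset v := Set.toFinset_ssubset_toFinset.2 huv
  have hdeg : G.degree u ≤ G.degree v := Finset.card_le_card hN.subset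
  obtain ⟨w, hwv, hwu⟩ := Finset.exists_of_ssubset hN
  have hq : (G.degree v : ℝ) < q :=
    degree_lt_of_signlessLaplacian_mulVec_eq_smul hpos heig ⟨w, hwv⟩
  refine lt_of_mul_lt_mul_left ?_ (sub_pos.2 hq).le
  calc (q - G.degree v) * x u
      ≤ (q - G.degree u) * x u := by have := (hpos u).le; gcongr
    _ = ∑ w ∈ G.neighborFinset u, x w := sub_degree_mul_eq_sum_neighborFinset heig u
    _ < ∑ w ∈ G.neighborFinset v, x w :=
      Finset.sum_lt_sum_of_subset hN.subset hwv hwu (hpos w) fun w _ _ => (hpos w).le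
    _ = (q - G.degree v) * x v := (sub_degree_mul_eq_sum_neighborFinset heig v).symm

end SignlessLaplacian

/-- for the maximal outer-planar graph with `Δ = n - 2`,
the Perron eigenvector satisfies `x_k > x_0`. -/
theorem stmt_2 (n k : ℕ) (hn : 6 ≤ n) (hk1 : 3 ≤ k) (hk2 : k ≤ n - 3)
    (G : SimpleGraph (Fin n))
    (h0 : G.neighborSet ⟨0, by omega⟩ = {⟨1, by omega⟩, ⟨n - 1, by omega⟩})
    (hk' : G.neighborSet ⟨k, by omega⟩ =
      {u : Fin n | u ≠ ⟨0, by omega⟩ ∧ u ≠ ⟨k, by omega⟩})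
    (h1 : G.neighborSet ⟨1, by omega⟩ =
      {⟨0, by omega⟩, ⟨2, by omega⟩, ⟨k, by omega⟩, ⟨n - 1, by omega⟩})
    (hlast : G.neighborSet ⟨n - 1, by omega⟩ =
      {⟨0, by omega⟩, ⟨1, by omega⟩, ⟨k, by omega⟩, ⟨n - 2, by omega⟩})
    (x : Fin n → ℝ) (hpos : ∀ i, 0 < x i)
    (heig : (signlessLaplacian G).mulVec x = qIndex G • x) :
    x ⟨0, by omega⟩ < x ⟨k, by omega⟩ := by
  refine stmt_2_general hpos heig
    (neighborSet_ssubset_of_neighborSet_eq hk' (w := ⟨2, by omega⟩) ?_ ?_ ?_)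
  · simp
  · simp only [ne_eq, Fin.mk.injEq]
    omega
  · rw [← SimpleGraph.mem_neighborSet, h0]
    simp only [Set.mem_insert_iff, Set.mem_singleton_iff, Fin.mk.injEq]
    omega
end
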